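/- arXiv:0708.2572 — 2 statements merged into one kernel-verified Lean document; each statement's English description precedes it below -/
import Mathlib

section
/- For n ≥ 6 with n ≡ 1 (mod 4), writing d_n(q) = ∑_{k=1}^{β_n} A_n(k) q^k with β_n = binom(n,2) - 1 and r = n(n-1)/4, the sequence A_n(β_n + 2 - k)/A_n(k) for k = 2, ..., r is strictly increasing, and A_n(r+1)/A_n(r) < 1. -/
open Polynomial

/-- The q-derangement polynomial, defined by the recursion
`d_n(q) = (1+q+⋯+q^{n-1}) d_{n-1}(q) + (-1)^n q^{C(n,2)}` for `n ≥ 2`, with `d_1(q) = 0`. -/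
noncomputable def dq : ℕ → Polynomial ℤ
  | 0 => 0
  | 1 => 0
  | (n + 2) =>
      (∑ i ∈ Finset.range (n + 2), X ^ i) * dq (n + 1)
        + (-1) ^ (n + 2) * X ^ ((n + 2).choose 2)

/-- `A n k` is the coefficient of `q^k` in `d_n(q)`. -/
noncomputable def A (n k : ℕ) : ℤ := (dq n).coeff k

/-- Window sum: convolution with `1 + q + ⋯ + q^{m-1}`. -/
noncomputable def cv (m : ℤ) (f : ℤ → ℤ) (k : ℤ) : ℤ := ∑ x ∈ Finset.Ioc (k - m) k, f x

/-- Positivity on `[1,c-1]` and strict ratio monotonicity for the reflection `k ↦ c+1-k`. -/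
structure HH (c : ℤ) (f : ℤ → ℤ) : Prop where
  pos : ∀ k, 1 ≤ k → k ≤ c - 1 → 0 < f k
  lo : ∀ k, k ≤ 0 → f k = 0
  hi : ∀ k, c ≤ k → f k = 0
  mlr : ∀ k, 1 ≤ k → k ≤ c - 1 → f (k + 1) * f (c + 1 - k) < f k * f (c - k)

lemma HH.nonneg {c : ℤ} {f : ℤ → ℤ} (h : HH c f) (k : ℤ) : 0 ≤ f k := by
  rcases le_or_gt k 0 with h0 | h0
  · rw [h.lo k h0]
  rcases le_or_gt c k with h1 | h1
  · rw [h.hi k h1]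
  exact (h.pos k (by omega) (by omega)).le

lemma HH.strict {c : ℤ} {f : ℤ → ℤ} (h : HH c f) {i j : ℤ} (hi : 1 ≤ i) (hij : i < j)
    (hj : j ≤ c) : f j * f (c + 1 - i) < f i * f (c + 1 - j) := by
  have key : ∀ j, i + 1 ≤ j → j ≤ c → f j * f (c + 1 - i) < f i * f (c + 1 - j) := by
    intro j hj
    induction j, hj using Int.leInduction with
    | base =>
      intro hc
      have := h.mlr i hi (by omega)
      rwa [show c + 1 - (i + 1) = c - i by ring]
    | succ j hj ih =>
      intro hc
      have h1 := ih (by omega)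
      have h2 := h.mlr j (by omega) (by omega)
      rw [show c + 1 - (j + 1) = c - j by ring]
      have pj := h.pos j (by omega) (by omega)
      have qj := h.pos (c + 1 - j) (by omega) (by omega)
      have h3 := mul_lt_mul'' h1 h2 (mul_nonneg (h.nonneg _) (h.nonneg _))
        (mul_nonneg (h.nonneg _) (h.nonneg _))
      refine lt_of_mul_lt_mul_right ?_ (mul_pos pj qj).le
      nlinarith [h3]
  exact key j (by omega) hj

lemma HH.weak {c : ℤ} {f : ℤ → ℤ} (h : HH c f) {i j : ℤ} (hij : i < j) :
    f j * f (c + 1 - i) ≤ f i * f (c + 1 - j) := by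
  rcases le_or_gt i 0 with h0 | h0
  · rw [h.lo i h0, h.hi (c + 1 - i) (by omega)]; simp
  rcases lt_or_ge c j with h1 | h1
  · rw [h.hi j (by omega), h.lo (c + 1 - j) (by omega)]; simp
  exact (h.strict (by omega) hij h1).le

lemma cv_reflect (m c : ℤ) (f : ℤ → ℤ) (k : ℤ) :
    cv m f (c + m - k) = ∑ x ∈ Finset.Ioc (k - m) k, f (c + 1 - x) := by
  unfold cv
  refine Finset.sum_nbij' (fun x => c + 1 - x) (fun x => c + 1 - x) ?_ ?_ ?_ ?_ ?_
  · intro x hx; simp only [Finset.mem_Ioc] at *; omega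
  · intro x hx; simp only [Finset.mem_Ioc] at *; omega
  · intro x hx; ring
  · intro x hx; ring
  · intro x hx; congr 1; ring

lemma cv_left (m : ℤ) (hm : 1 ≤ m) (f : ℤ → ℤ) (k : ℤ) :
    cv m f k = f (k - m + 1) + ∑ x ∈ Finset.Ioc (k - m + 1) k, f x := by
  unfold cv
  have : Finset.Ioc (k - m) k = insert (k - m + 1) (Finset.Ioc (k - m + 1) k) := by
    ext x; simp only [Finset.mem_Ioc, Finset.mem_insert]; omega
  rw [this, Finset.sum_insert (by simp)]

lemma cv_right (m : ℤ) (hm : 1 ≤ m) (f : ℤ → ℤ) (k : ℤ) :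
    cv m f (k + 1) = f (k + 1) + ∑ x ∈ Finset.Ioc (k - m + 1) k, f x := by
  unfold cv
  have : Finset.Ioc (k + 1 - m) (k + 1) = insert (k + 1) (Finset.Ioc (k - m + 1) k) := by
    ext x; simp only [Finset.mem_Ioc, Finset.mem_insert]; omega
  rw [this, Finset.sum_insert (by simp)]

/-- Expansion of consecutive minors of window sums. -/
lemma cv_minor (m : ℤ) (hm : 1 ≤ m) (f g : ℤ → ℤ) (k : ℤ) :
    cv m f k * cv m g (k + 1) - cv m f (k + 1) * cv m g k =
      (∑ y ∈ Finset.Ioc (k - m + 1) k, (f (k - m + 1) * g y - f y * g (k - m + 1)))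
      + (f (k - m + 1) * g (k + 1) - f (k + 1) * g (k - m + 1))
      + ∑ x ∈ Finset.Ioc (k - m + 1) k, (f x * g (k + 1) - f (k + 1) * g x) := by
  rw [cv_right m hm f, cv_right m hm g, cv_left m hm f, cv_left m hm g]
  simp only [Finset.sum_sub_distrib, ← Finset.mul_sum, ← Finset.sum_mul]
  ring

/-- `g` is the reflection. -/
def rf (c : ℤ) (f : ℤ → ℤ) (k : ℤ) : ℤ := f (c + 1 - k)

lemma cv_rf (m c : ℤ) (f : ℤ → ℤ) (k : ℤ) : cv m (rf c f) k = rf (c + m - 1) (cv m f) k := by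
  unfold rf
  rw [show c + m - 1 + 1 - k = c + m - k by ring, cv_reflect]
  rfl

lemma HH.weak' {c : ℤ} {f : ℤ → ℤ} (h : HH c f) {i j : ℤ} (hij : i < j) :
    0 ≤ f i * rf c f j - f j * rf c f i := by
  have := h.weak hij
  unfold rf; linarith

lemma HH.strict' {c : ℤ} {f : ℤ → ℤ} (h : HH c f) {i j : ℤ} (hi : 1 ≤ i) (hij : i < j)
    (hj : j ≤ c) : 0 < f i * rf c f j - f j * rf c f i := by
  have := h.strict hi hij hj
  unfold rf; linarith

lemma HH.conv {c : ℤ} {f : ℤ → ℤ} (h : HH c f) (m : ℤ) (hm : 1 ≤ m) (hc : 2 ≤ c) (hmc : m ≤ c) :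
    HH (c + m - 1) (cv m f) := by
  refine ⟨?_, ?_, ?_, ?_⟩
  · intro k h1 h2
    unfold cv
    refine Finset.sum_pos' (fun x _ => h.nonneg x) ⟨min k (c - 1), ?_, ?_⟩
    · simp only [Finset.mem_Ioc]; omega
    · exact h.pos _ (by omega) (by omega)
  · intro k h1
    unfold cv
    refine Finset.sum_eq_zero fun x hx => ?_
    simp only [Finset.mem_Ioc] at hx
    exact h.lo x (by omega)
  · intro k h1
    unfold cv
    refine Finset.sum_eq_zero fun x hx => ?_
    simp only [Finset.mem_Ioc] at hx
    exact h.hi x (by omega)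
  · intro k h1 h2
    have e1 : cv m f (c + m - 1 + 1 - k) = cv m (rf c f) k := by rw [cv_rf]; rfl
    have e2 : cv m f (c + m - 1 - k) = cv m (rf c f) (k + 1) := by
      rw [cv_rf]; unfold rf; congr 1; ring
    rw [e1, e2]
    have e3 := cv_minor m hm f (rf c f) k
    have p1 : ∀ y ∈ Finset.Ioc (k - m + 1) k,
        0 ≤ f (k - m + 1) * rf c f y - f y * rf c f (k - m + 1) := by
      intro y hy; simp only [Finset.mem_Ioc] at hy; exact h.weak' (by omega)
    have p3 : ∀ x ∈ Finset.Ioc (k - m + 1) k,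
        0 ≤ f x * rf c f (k + 1) - f (k + 1) * rf c f x := by
      intro y hy; simp only [Finset.mem_Ioc] at hy; exact h.weak' (by omega)
    have p2 : 0 ≤ f (k - m + 1) * rf c f (k + 1) - f (k + 1) * rf c f (k - m + 1) :=
      h.weak' (by omega)
    have s1 := Finset.sum_nonneg p1
    have s3 := Finset.sum_nonneg p3
    rcases lt_or_ge (k - m + 1) 1 with ha | ha
    · have s3' := Finset.sum_pos' p3 ⟨1, by simp only [Finset.mem_Ioc]; omega,
        h.strict' (by omega) (by omega) (by omega)⟩
      linarith
    · rcases le_or_gt (k + 1) c with hb | hb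
      · have p2' := h.strict' (i := k - m + 1) (j := k + 1) ha (by omega) hb
        linarith
      · have s1' := Finset.sum_pos' p1 ⟨c, by simp only [Finset.mem_Ioc]; omega,
          h.strict' (by omega) (by omega) (by omega)⟩
        linarith

lemma cv_low (m : ℤ) (f : ℤ → ℤ) (lo : ∀ k, k ≤ 0 → f k = 0) (k : ℤ) (hk : k ≤ m) :
    cv m f k = ∑ x ∈ Finset.Ioc 0 k, f x := by
  unfold cv
  symm
  refine Finset.sum_subset ?_ ?_
  · intro x; simp only [Finset.mem_Ioc]; omega
  · intro x; simp only [Finset.mem_Ioc]; intro h1 h2; exact lo x (by omega)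

lemma cv_vals (m : ℤ) (hm : 3 ≤ m) (f : ℤ → ℤ) (lo : ∀ k, k ≤ 0 → f k = 0) :
    cv m f 1 = f 1 ∧ cv m f 2 = f 1 + f 2 ∧ cv m f 3 = f 1 + f 2 + f 3 := by
  rw [cv_low m f lo 1 (by omega), cv_low m f lo 2 (by omega), cv_low m f lo 3 hm]
  rw [show Finset.Ioc (0:ℤ) 1 = {1} by decide, show Finset.Ioc (0:ℤ) 2 = {1, 2} by decide,
    show Finset.Ioc (0:ℤ) 3 = {1, 2, 3} by decide]
  refine ⟨by simp, by simp, ?_⟩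
  simp; ring

lemma HH.rf_lo {c : ℤ} {f : ℤ → ℤ} (h : HH c f) (k : ℤ) (hk : k ≤ 1) : rf c f k = 0 :=
  h.hi _ (by omega)

/-- The extra gap: `M₁(x, n+1) ≥ G₁(n+1)`. -/
lemma HH.gap {c : ℤ} {f : ℤ → ℤ} (h : HH c f) (hf1 : f 1 = 1) (n x : ℤ)
    (hx : 1 ≤ x) (hxn : x ≤ n) :
    cv n (rf c f) (n + 1) ≤
      cv n f x * cv n (rf c f) (n + 1) - cv n f (n + 1) * cv n (rf c f) x := by
  have lo' : ∀ k, k ≤ 0 → rf c f k = 0 := fun k hk => h.rf_lo k (by omega)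
  have a1 : ∀ u : ℤ → ℤ, (∀ k, k ≤ 0 → u k = 0) →
      cv n u x = u 1 + ∑ t ∈ Finset.Ioc 1 x, u t := by
    intro u hu
    rw [cv_low n u hu x hxn]
    have : Finset.Ioc 0 x = insert 1 (Finset.Ioc 1 x) := by
      ext t; simp only [Finset.mem_Ioc, Finset.mem_insert]; omega
    rw [this, Finset.sum_insert (by simp)]
  have a2 : ∀ u : ℤ → ℤ, cv n u (n + 1) =
      ∑ t ∈ Finset.Ioc 1 x, u t + ∑ t ∈ Finset.Ioc x (n + 1), u t := by
    intro u
    unfold cv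
    rw [show n + 1 - n = 1 by ring, ← Finset.sum_union]
    · congr 1; ext t; simp only [Finset.mem_Ioc, Finset.mem_union]; omega
    · rw [Finset.disjoint_left]; intro t; simp only [Finset.mem_Ioc]; omega
  rw [a1 f h.lo, a1 _ lo', a2, a2, h.rf_lo 1 le_rfl, hf1]
  have key : (∑ t ∈ Finset.Ioc x (n + 1), f t) * (∑ t ∈ Finset.Ioc 1 x, rf c f t) ≤
      (∑ t ∈ Finset.Ioc 1 x, f t) * (∑ t ∈ Finset.Ioc x (n + 1), rf c f t) := by
    rw [mul_comm, Finset.sum_mul_sum, Finset.sum_mul_sum]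
    refine Finset.sum_le_sum fun i hi => Finset.sum_le_sum fun j hj => ?_
    simp only [Finset.mem_Ioc] at hi hj
    have := h.weak' (i := i) (j := j) (by omega)
    linarith
  nlinarith [key]

/-- Full invariant for odd `n = 2m+1`. -/
structure OddInv (m : ℤ) (f : ℤ → ℤ) : Prop where
  hh : HH ((2 * m + 1) * m) f
  f1 : f 1 = 1
  f2 : f 2 = 2 * m - 1
  f3 : f 3 = (2 * m + 1) * (m - 1)
  g2 : rf ((2 * m + 1) * m) f 2 = m
  g3 : rf ((2 * m + 1) * m) f 3 = m ^ 2

/-- One double step. -/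
noncomputable def stp (m : ℤ) (f : ℤ → ℤ) (k : ℤ) : ℤ :=
  cv (2 * m + 2) (cv (2 * m + 3) f) k +
    if (2 * m + 1) * (m + 1) ≤ k ∧ k ≤ (2 * m + 3) * (m + 1) - 1 then 1 else 0

set_option maxHeartbeats 1000000 in
lemma OddInv.step {m : ℤ} {f : ℤ → ℤ} (h : OddInv m f) (hm : 3 ≤ m) : OddInv (m + 1) (stp m f) := by
  obtain ⟨hh, f1, f2, f3, g2, g3⟩ := h
  obtain ⟨c, hc⟩ : ∃ c, c = (2 * m + 1) * m := ⟨_, rfl⟩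
  rw [← hc] at hh g2 g3
  have hcm : 7 * m ≤ c := by nlinarith
  obtain ⟨F1, hF1⟩ : ∃ F1, F1 = cv (2 * m + 3) f := ⟨_, rfl⟩
  obtain ⟨G1, hG1⟩ : ∃ G1, G1 = cv (2 * m + 3) (rf c f) := ⟨_, rfl⟩
  obtain ⟨F, hF⟩ : ∃ F, F = cv (2 * m + 2) F1 := ⟨_, rfl⟩
  obtain ⟨G, hG⟩ : ∃ G, G = cv (2 * m + 2) G1 := ⟨_, rfl⟩
  have hh1 : HH (c + (2 * m + 3) - 1) F1 := hF1 ▸ hh.conv _ (by omega) (by omega) (by omega)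
  have rG1 : rf (c + (2 * m + 3) - 1) F1 = G1 := by
    funext k; rw [hF1, hG1, cv_rf]
  have hh2 : HH (c + (2 * m + 3) - 1 + (2 * m + 2) - 1) F :=
    hF ▸ hh1.conv _ (by omega) (by omega) (by omega)
  have rG : rf (c + (2 * m + 3) - 1 + (2 * m + 2) - 1) F = G := by
    funext k; rw [hF, hG, ← rG1, cv_rf]
  obtain ⟨d, hd⟩ : ∃ d, d = c + (2 * m + 3) - 1 + (2 * m + 2) - 1 := ⟨_, rfl⟩
  rw [← hd] at hh2 rG
  have hd' : (2 * m + 3) * (m + 1) = d := by rw [hd, hc]; ring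
  have hd'' : (2 * (m + 1) + 1) * (m + 1) = d := by rw [hd, hc]; ring
  have hd3 : (2 * m + 1) * (m + 1) = d - (2 * m + 2) := by rw [hd, hc]; ring
  have hst : ∀ k, stp m f k = F k + if d - (2 * m + 2) ≤ k ∧ k ≤ d - 1 then 1 else 0 := by
    intro k; unfold stp; rw [hd', hd3, hF, hF1]
  -- values
  have lo' : ∀ k, k ≤ 0 → rf c f k = 0 := fun k hk => hh.rf_lo k (by omega)
  have g1 : rf c f 1 = 0 := hh.rf_lo 1 le_rfl
  obtain ⟨F11, F12, F13⟩ := cv_vals (2 * m + 3) (by omega) f hh.lo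
  obtain ⟨G11, G12, G13⟩ := cv_vals (2 * m + 3) (by omega) (rf c f) lo'
  rw [← hF1] at F11 F12 F13
  rw [← hG1] at G11 G12 G13
  have loG1 : ∀ k, k ≤ 0 → G1 k = 0 := fun k hk => rG1 ▸ hh1.rf_lo k (by omega)
  obtain ⟨F21, F22, F23⟩ := cv_vals (2 * m + 2) (by omega) F1 hh1.lo
  obtain ⟨G21, G22, G23⟩ := cv_vals (2 * m + 2) (by omega) G1 loG1
  rw [← hF] at F21 F22 F23
  rw [← hG] at G21 G22 G23
  rw [f1] at F11 F12 F13
  rw [f2] at F12 F13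
  rw [f3] at F13
  rw [g1] at G11 G12 G13
  rw [g2] at G12 G13
  rw [g3] at G13
  have rFd : ∀ k, F (d + 1 - k) = G k := fun k => by rw [← rG]; rfl
  have hrst : ∀ k, rf d (stp m f) k = G k + if 2 ≤ k ∧ k ≤ 2 * m + 3 then 1 else 0 := by
    intro k
    unfold rf
    rw [hst, rFd]
    congr 1
    refine if_congr ?_ rfl rfl
    omega
  have M1weak : ∀ i j, i < j → 0 ≤ F1 i * G1 j - F1 j * G1 i := by
    intro i j hij; rw [← rG1]; exact hh1.weak' hij
  -- ratio bound
  have star : ∀ y, 3 ≤ y → m * F1 y ≤ (2 * m - 1) * G1 y := by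
    intro y hy
    rcases eq_or_lt_of_le hy with rfl | hy
    · rw [F13, G13]; nlinarith
    · have := M1weak 3 y hy
      rw [F13, G13] at this
      have : 0 ≤ (m + 1) * ((2 * m - 1) * G1 y - m * F1 y) := by nlinarith
      have := nonneg_of_mul_nonneg_right this (by omega)
      linarith
  have M2 : ∀ y, 3 ≤ y → m * F1 y ≤ (2 * m - 1) * (F1 2 * G1 y - F1 y * G1 2) := by
    intro y hy
    have := star y hy
    rw [F12, G12]
    nlinarith
  -- the main inequality on the left half
  have half : ∀ k, 1 ≤ k → 2 * k ≤ d →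
      stp m f (k + 1) * rf d (stp m f) k < stp m f k * rf d (stp m f) (k + 1) := by
    intro k h1 h2
    rw [hst (k + 1), if_neg (by omega), hst k, if_neg (by omega), add_zero, add_zero, hrst k,
      hrst (k + 1)]
    have hexp := cv_minor (2 * m + 2) (by omega) F1 G1 k
    rw [← hF, ← hG] at hexp
    have p1 : ∀ y ∈ Finset.Ioc (k - (2 * m + 2) + 1) k,
        0 ≤ F1 (k - (2 * m + 2) + 1) * G1 y - F1 y * G1 (k - (2 * m + 2) + 1) := by
      intro y hy; simp only [Finset.mem_Ioc] at hy; exact M1weak _ _ (by omega)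
    have p3 : ∀ x ∈ Finset.Ioc (k - (2 * m + 2) + 1) k,
        0 ≤ F1 x * G1 (k + 1) - F1 (k + 1) * G1 x := by
      intro y hy; simp only [Finset.mem_Ioc] at hy; exact M1weak _ _ (by omega)
    have p2 : 0 ≤ F1 (k - (2 * m + 2) + 1) * G1 (k + 1) - F1 (k + 1) * G1 (k - (2 * m + 2) + 1) :=
      M1weak _ _ (by omega)
    rcases eq_or_lt_of_le h1 with rfl | h1
    · have gn : 0 ≤ G (1 + 1) := by rw [← rG]; exact hh2.nonneg _
      rw [G21, G11, if_neg (by omega), if_pos (by omega), F21, F11]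
      linarith
    rcases lt_trichotomy k (2 * m + 3) with hk | hk | hk
    · rw [if_pos (by omega), if_pos (by omega)]
      have hW : F1 1 * G1 (k + 1) - F1 (k + 1) * G1 1 + (F1 2 * G1 (k + 1) - F1 (k + 1) * G1 2)
          ≤ F k * G (k + 1) - F (k + 1) * G k := by
        rcases eq_or_lt_of_le (show k ≤ 2 * m + 2 by omega) with hk' | hk'
        · have e : k - (2 * m + 2) + 1 = 1 := by omega
          rw [e] at hexp p1 p3
          have s1 := Finset.sum_nonneg p1
          have s3 := Finset.single_le_sum p3 (a := 2) (by simp only [Finset.mem_Ioc]; omega)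
          linarith
        · have hsub : ({1, 2} : Finset ℤ) ⊆ Finset.Ioc (k - (2 * m + 2) + 1) k := by
            intro x; simp only [Finset.mem_Ioc, Finset.mem_insert, Finset.mem_singleton]; omega
          have s3 := Finset.sum_le_sum_of_subset_of_nonneg hsub (fun i hi _ => p3 i hi)
          rw [Finset.sum_pair (by norm_num)] at s3
          have s1 := Finset.sum_nonneg p1
          linarith
      have hst := star (k + 1) (by omega)
      have hM := M2 (k + 1) (by omega)
      have hFp : 0 < F1 (k + 1) := hh1.pos _ (by omega) (by omega)
      have hdiff : F (k + 1) - F k ≤ F1 (k + 1) := by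
        rw [hF, cv_right _ (by omega), cv_left _ (by omega)]
        linarith [hh1.nonneg (k - (2 * m + 2) + 1)]
      have hWF : F1 (k + 1) < F k * G (k + 1) - F (k + 1) * G k := by
        refine lt_of_mul_lt_mul_left ?_ (show 0 ≤ 2 * m - 1 by omega)
        have := mul_le_mul_of_nonneg_left hW (show 0 ≤ 2 * m - 1 by omega)
        rw [F11, G11] at this
        linarith
      linarith
    · rw [if_pos (by omega), if_neg (by omega)]
      have e : k - (2 * m + 2) + 1 = 2 := by omega
      have hFr : F (k + 1) = F1 (k + 1) + ∑ x ∈ Finset.Ioc 2 k, F1 x := by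
        rw [hF, cv_right _ (by omega), e]
      rw [e] at hexp
      have q1 : ∑ y ∈ Finset.Ioc 2 k, m * F1 y ≤
          ∑ y ∈ Finset.Ioc 2 k, (2 * m - 1) * (F1 2 * G1 y - F1 y * G1 2) := by
        refine Finset.sum_le_sum fun y hy => M2 y ?_
        simp only [Finset.mem_Ioc] at hy; omega
      rw [← Finset.mul_sum, ← Finset.mul_sum] at q1
      have q2 := M2 (k + 1) (by omega)
      have hcard : ((Finset.Ioc 2 k).card : ℤ) = 2 * m + 1 := by
        rw [Int.card_Ioc]; omega
      have q3 : (2 * m + 1) * G1 (k + 1) ≤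
          ∑ x ∈ Finset.Ioc 2 k, (F1 x * G1 (k + 1) - F1 (k + 1) * G1 x) := by
        have := Finset.card_nsmul_le_sum (Finset.Ioc 2 k)
          (fun x => F1 x * G1 (k + 1) - F1 (k + 1) * G1 x) (G1 (k + 1)) (by
            intro x hx
            simp only [Finset.mem_Ioc] at hx
            have := hh.gap f1 k x (by omega) (by omega)
            rw [hk, ← hF1, ← hG1, ← hk] at this
            exact this)
        rw [nsmul_eq_mul, hcard] at this
        exact this
      have q4 := star (k + 1) (by omega)
      have q5 : ∑ x ∈ Finset.Ioc 2 k, F1 x ≤ (2 * m + 1) * F1 (k + 1) := by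
        have := Finset.sum_le_card_nsmul (Finset.Ioc 2 k) F1 (F1 (k + 1)) (by
          intro y hy
          simp only [Finset.mem_Ioc] at hy
          have a1 : F1 y = ∑ t ∈ Finset.Ioc 0 y, f t := by
            rw [hF1]; exact cv_low _ f hh.lo y (by omega)
          have a2 : Finset.Ioc 0 y = insert 1 (Finset.Ioc 1 y) := by
            ext t; simp only [Finset.mem_Ioc, Finset.mem_insert]; omega
          have a3 : F1 (k + 1) = ∑ t ∈ Finset.Ioc 1 (k + 1), f t := by
            rw [hF1]; unfold cv; rw [show k + 1 - (2 * m + 3) = 1 by omega]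
          have a4 : insert (k + 1) (Finset.Ioc 1 y) ⊆ Finset.Ioc 1 (k + 1) := by
            intro t; simp only [Finset.mem_Ioc, Finset.mem_insert]; omega
          have a5 := Finset.sum_le_sum_of_subset_of_nonneg (f := f) a4
            (fun i _ _ => hh.nonneg i)
          rw [Finset.sum_insert (by simp only [Finset.mem_Ioc]; omega)] at a5
          rw [a1, a2, a3, Finset.sum_insert (by simp), f1]
          have := hh.pos (k + 1) (by omega) (by omega)
          linarith)
        rw [nsmul_eq_mul, hcard] at this
        exact this
      have hFp : 0 < F1 (k + 1) := hh1.pos _ (by omega) (by omega)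
      have hWF : F (k + 1) < F k * G (k + 1) - F (k + 1) * G k := by
        refine lt_of_mul_lt_mul_left ?_ (show 0 ≤ 2 * m - 1 by omega)
        rw [hexp, hFr]
        have r3 := mul_le_mul_of_nonneg_left q3 (show 0 ≤ 2 * m - 1 by omega)
        have r4 := mul_le_mul_of_nonneg_left q4 (show 0 ≤ 2 * m + 1 by omega)
        have r5 := mul_le_mul_of_nonneg_left q5 (show 0 ≤ m - 1 by omega)
        have r6 : 0 < m * F1 (k + 1) := mul_pos (by omega) hFp
        generalize ∑ y ∈ Finset.Ioc 2 k, (F1 2 * G1 y - F1 y * G1 2) = w1 at *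
        generalize ∑ x ∈ Finset.Ioc 2 k, (F1 x * G1 (k + 1) - F1 (k + 1) * G1 x) = w3 at *
        generalize ∑ x ∈ Finset.Ioc 2 k, F1 x = w0 at *
        generalize F1 2 * G1 (k + 1) - F1 (k + 1) * G1 2 = w2 at *
        linarith
      linarith
    · rw [if_neg (by omega), if_neg (by omega), add_zero, add_zero]
      have := hh2.mlr k (by omega) (by omega)
      have e : F (d - k) = G (k + 1) := by rw [← rFd]; congr 1; ring
      rwa [rFd, e] at this
  refine ⟨?_, ?_, ?_, ?_, ?_, ?_⟩
  · rw [hd'']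
    refine ⟨?_, ?_, ?_, ?_⟩
    · intro k h1 h2
      rw [hst]
      have := hh2.pos k h1 h2
      split_ifs <;> omega
    · intro k h1
      rw [hst, if_neg (by omega), hh2.lo k h1]; rfl
    · intro k h1
      rw [hst, if_neg (by omega), hh2.hi k h1]; rfl
    · intro k h1 h2
      rcases le_or_gt (2 * k) d with h3 | h3
      · have := half k h1 h3
        unfold rf at this
        rwa [show d + 1 - (k + 1) = d - k by ring] at this
      · have := half (d - k) (by omega) (by omega)
        unfold rf at this
        rw [show d + 1 - (d - k + 1) = k by ring, show d + 1 - (d - k) = k + 1 by ring,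
          show d - k + 1 = d + 1 - k by ring] at this
        linarith
  · rw [hst, if_neg (by omega), F21, F11]; rfl
  · rw [hst, if_neg (by omega), F22, F11, F12]; ring
  · rw [hst, if_neg (by omega), F23, F11, F12, F13]; ring
  · rw [hd'', hrst, if_pos (by omega), G22, G11, G12]; ring
  · rw [hd'', hrst, if_pos (by omega), G23, G11, G12, G13]; ring

/-- Integer-indexed coefficients. -/
noncomputable def aZ (n : ℕ) (k : ℤ) : ℤ := if 0 ≤ k then A n k.toNat else 0

lemma coeff_window (m : ℕ) (p : Polynomial ℤ) (k : ℤ) (hk : 0 ≤ k) :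
    ((∑ i ∈ Finset.range m, (X : Polynomial ℤ) ^ i) * p).coeff k.toNat =
      cv m (fun k => if 0 ≤ k then p.coeff k.toNat else 0) k := by
  rw [Finset.sum_mul, Polynomial.finsetSum_coeff]
  unfold cv
  refine Finset.sum_nbij' (fun i => k - (i : ℤ)) (fun x => (k - x).toNat) ?_ ?_ ?_ ?_ ?_
  · intro x hx; simp only [Finset.mem_Ioc, Finset.mem_range] at *; omega
  · intro x hx; simp only [Finset.mem_Ioc, Finset.mem_range] at *; omega
  · intro x hx; simp only [Finset.mem_Ioc, Finset.mem_range] at *; omega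
  · intro x hx; simp only [Finset.mem_Ioc, Finset.mem_range] at *; omega
  · intro x hx
    rw [Polynomial.coeff_X_pow_mul']
    refine ite_congr (by simp; omega) (fun h => ?_) (fun _ => rfl)
    congr 1; omega

lemma aZ_rec (n : ℕ) (k : ℤ) : aZ (n + 2) k =
    cv ((n + 2 : ℕ) : ℤ) (aZ (n + 1)) k + if k = (((n + 2).choose 2 : ℕ) : ℤ) then (-1) ^ n else 0 := by
  rcases lt_or_ge k 0 with hk | hk
  · rw [if_neg (by omega), add_zero]
    unfold aZ cv
    rw [if_neg (by omega)]
    symm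
    refine Finset.sum_eq_zero fun x hx => ?_
    simp only [Finset.mem_Ioc] at hx
    rw [if_neg (by omega)]
  · have : aZ (n + 2) k = (dq (n + 2)).coeff k.toNat := by
      unfold aZ A; rw [if_pos hk]
    rw [this, dq, Polynomial.coeff_add, coeff_window _ _ _ hk]
    congr 1
    rw [pow_add, show ((-1 : Polynomial ℤ) ^ 2) = 1 by norm_num, mul_one,
      show ((-1 : Polynomial ℤ) ^ n) = C ((-1) ^ n) by simp, Polynomial.coeff_C_mul_X_pow]
    refine if_congr ?_ rfl rfl
    omega

lemma cv_add (m : ℤ) (f g : ℤ → ℤ) (k : ℤ) :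
    cv m (fun x => f x + g x) k = cv m f k + cv m g k := by
  unfold cv; exact Finset.sum_add_distrib

lemma cv_delta (m s k : ℤ) (v : ℤ) :
    cv m (fun x => if x = s then v else 0) k = if s ≤ k ∧ k < s + m then v else 0 := by
  unfold cv
  rw [Finset.sum_ite_eq']
  refine if_congr ?_ rfl rfl
  simp only [Finset.mem_Ioc]; omega

lemma cv_comm (m n : ℤ) (hm : 0 ≤ m) (hn : 0 ≤ n) (f : ℤ → ℤ) (k : ℤ) :
    cv m (cv n f) k = cv n (cv m f) k := by
  have e : ∀ (m : ℤ), ∀ (f : ℤ → ℤ) (k : ℤ), cv m f k = ∑ t ∈ Finset.Ico 0 m, f (k - t) := by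
    intro m f k
    unfold cv
    refine Finset.sum_nbij' (fun x => k - x) (fun x => k - x) ?_ ?_ ?_ ?_ ?_
    · intro x hx; simp only [Finset.mem_Ioc, Finset.mem_Ico] at *; omega
    · intro x hx; simp only [Finset.mem_Ioc, Finset.mem_Ico] at *; omega
    · intro x hx; ring
    · intro x hx; ring
    · intro x hx; congr 1; ring
  simp only [e]
  rw [Finset.sum_comm]
  refine Finset.sum_congr rfl fun i _ => Finset.sum_congr rfl fun j _ => ?_
  congr 1; ring

lemma choose_odd (m : ℕ) : (((2 * m + 3).choose 2 : ℕ) : ℤ) = (2 * m + 3) * (m + 1) := by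
  rw [Nat.choose_two_right, show (2 * m + 3) * (2 * m + 3 - 1) = 2 * ((2 * m + 3) * (m + 1)) by
    rw [show 2 * m + 3 - 1 = 2 * (m + 1) by omega]; ring, Nat.mul_div_cancel_left _ (by norm_num)]
  push_cast; ring

lemma choose_even (m : ℕ) : (((2 * m + 2).choose 2 : ℕ) : ℤ) = (2 * m + 1) * (m + 1) := by
  rw [Nat.choose_two_right, show (2 * m + 2) * (2 * m + 2 - 1) = 2 * ((2 * m + 1) * (m + 1)) by
    rw [show 2 * m + 2 - 1 = 2 * m + 1 by omega]; ring, Nat.mul_div_cancel_left _ (by norm_num)]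
  push_cast; ring

lemma aZ_step (m : ℕ) : aZ (2 * m + 3) = stp m (aZ (2 * m + 1)) := by
  funext k
  have h1 : aZ (2 * m + 2) = fun k => cv (2 * m + 2) (aZ (2 * m + 1)) k +
      if k = (2 * m + 1) * (m + 1) then 1 else 0 := by
    funext k
    rw [aZ_rec (2 * m), choose_even]
    congr 1
    refine if_congr Iff.rfl ?_ rfl
    simp
  rw [show 2 * m + 3 = 2 * m + 1 + 2 by ring, aZ_rec (2 * m + 1),
    show 2 * m + 1 + 1 = 2 * m + 2 by ring, h1, cv_add, cv_delta,
    show 2 * m + 1 + 2 = 2 * m + 3 by ring, choose_odd]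
  unfold stp
  rw [cv_comm (2 * m + 2) (2 * m + 3) (by positivity) (by positivity)]
  have : ((2 * m + 3 : ℕ) : ℤ) = 2 * m + 3 := by push_cast; ring
  rw [this, add_assoc]
  congr 1
  have hp : ((-1 : ℤ) ^ (2 * m + 1)) = -1 := by rw [pow_succ, pow_mul]; simp
  rw [hp]
  have e1 : (2 * (m : ℤ) + 3) * (m + 1) = (2 * m + 1) * (m + 1) + 2 * m + 2 := by ring
  rw [e1]
  generalize (2 * (m : ℤ) + 1) * (m + 1) = s
  split_ifs <;> omega

/-- Coefficients of `d_7`. -/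
def l7 : List ℤ :=
  [0, 1, 5, 14, 30, 54, 86, 123, 160, 191, 210, 214, 202, 176, 141, 104, 69, 41, 21, 9, 3]

lemma base7 : dq 7 = ∑ i ∈ Finset.range 21, C (l7.getD i 0) * X ^ i := by
  simp only [dq, Finset.sum_range_succ, Finset.sum_range_zero, l7,
    List.getD_cons_zero, List.getD_cons_succ, map_ofNat, map_zero, map_one,
    show Nat.choose 2 2 = 1 from rfl, show Nat.choose 3 2 = 3 from rfl,
    show Nat.choose 4 2 = 6 from rfl, show Nat.choose 5 2 = 10 from rfl,
    show Nat.choose 6 2 = 15 from rfl, show Nat.choose 7 2 = 21 from rfl]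
  ring

lemma aZ7 (k : ℤ) : aZ 7 k = if 0 ≤ k then l7.getD k.toNat 0 else 0 := by
  unfold aZ A
  refine ite_congr rfl (fun hk => ?_) (fun _ => rfl)
  rw [base7, Polynomial.finsetSum_coeff]
  simp only [Polynomial.coeff_C_mul_X_pow]
  rw [Finset.sum_ite_eq]
  split_ifs with h
  · rfl
  · rw [Finset.mem_range] at h
    rw [List.getD_eq_default]
    simp only [l7, List.length_cons, List.length_nil]; omega

lemma inv_base : OddInv 3 (aZ 7) := by
  have e : aZ 7 = fun k => if 0 ≤ k then l7.getD k.toNat 0 else 0 := funext aZ7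
  rw [e]
  refine ⟨⟨?_, ?_, ?_, ?_⟩, ?_, ?_, ?_, ?_, ?_⟩
  · intro k h1 h2
    norm_num at h2
    interval_cases k <;> decide
  · intro k h1
    rcases lt_or_eq_of_le h1 with h | h
    · exact if_neg (by omega)
    · rw [h]; rfl
  · intro k h1
    norm_num at h1
    show (if (0 : ℤ) ≤ k then l7.getD k.toNat 0 else 0) = 0
    rw [if_pos (by omega), List.getD_eq_default]
    simp only [l7, List.length_cons, List.length_nil]; omega
  · intro k h1 h2
    norm_num at h2
    interval_cases k <;> decide
  all_goals decide

lemma inv_all (m : ℕ) (hm : 3 ≤ m) : OddInv m (aZ (2 * m + 1)) := by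
  induction m, hm using Nat.le_induction with
  | base => exact inv_base
  | succ m hm ih =>
    rw [show 2 * (m + 1) + 1 = 2 * m + 3 by ring, aZ_step]
    push_cast
    exact ih.step (by exact_mod_cast hm)

theorem stmt_15 (n : ℕ) (hn : 6 ≤ n) (hmod : n % 4 = 1) :
    (∀ k, 2 ≤ k → k + 1 ≤ n * (n - 1) / 4 →
      (A n (n.choose 2 - 1 + 2 - k) : ℚ) / (A n k : ℚ) <
        (A n (n.choose 2 - 1 + 2 - (k + 1)) : ℚ) / (A n (k + 1) : ℚ)) ∧
    (A n (n * (n - 1) / 4 + 1) : ℚ) / (A n (n * (n - 1) / 4) : ℚ) < 1 := by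
  obtain ⟨t, rfl⟩ : ∃ t, n = 4 * t + 1 := ⟨n / 4, by omega⟩
  have ht : 2 ≤ t := by omega
  have hI := (inv_all (2 * t) (by omega)).hh
  obtain ⟨r, hr⟩ : ∃ r, r = (4 * t + 1) * t := ⟨_, rfl⟩
  have h1 : (4 * t + 1) * (4 * t + 1 - 1) = 4 * r := by
    rw [hr, show 4 * t + 1 - 1 = 4 * t by omega]; ring
  have h2 : (4 * t + 1).choose 2 = 2 * r := by
    rw [Nat.choose_two_right, h1]; omega
  have h3 : 4 * r / 4 = r := by omega
  have hr2 : 2 ≤ r := by rw [hr]; nlinarith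
  have hc : (2 * ((2 * t : ℕ) : ℤ) + 1) * ((2 * t : ℕ) : ℤ) = 2 * r := by
    rw [hr]; push_cast; ring
  rw [hc, show 2 * (2 * t) + 1 = 4 * t + 1 by ring] at hI
  have ha : ∀ (k : ℕ) (j : ℤ), j = k → aZ (4 * t + 1) j = A (4 * t + 1) k := by
    rintro k j rfl
    unfold aZ; simp
  rw [h1, h2, h3]
  constructor
  · intro k hk hk'
    have p := hI.mlr k (by omega) (by omega)
    have p1 := hI.pos k (by omega) (by omega)
    have p2 := hI.pos (k + 1) (by omega) (by omega)
    rw [ha (k + 1) _ (by push_cast; ring)] at p p2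
    rw [ha k _ rfl] at p p1
    rw [ha (2 * r - 1 + 2 - k) _ (by omega), ha (2 * r - 1 + 2 - (k + 1)) _ (by omega)] at p
    rw [div_lt_div_iff₀ (by exact_mod_cast p1) (by exact_mod_cast p2)]
    have : A (4 * t + 1) (2 * r - 1 + 2 - k) * A (4 * t + 1) (k + 1) <
      A (4 * t + 1) (2 * r - 1 + 2 - (k + 1)) * A (4 * t + 1) k := by linarith
    exact_mod_cast this
  · have p := hI.mlr r (by omega) (by omega)
    have p1 := hI.pos r (by omega) (by omega)
    rw [ha (r + 1) _ (by push_cast; ring), ha (r + 1) _ (by push_cast; ring), ha r _ rfl,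
      ha r _ (by ring)] at p
    rw [ha r _ rfl] at p1
    rw [div_lt_one (by exact_mod_cast p1)]
    have : A (4 * t + 1) (r + 1) < A (4 * t + 1) r := by nlinarith
    exact_mod_cast this
end

section
/- For n ≥ 6, the coefficients A_n(1), A_n(2), ..., A_n(r) of the q-derangement polynomial d_n(q) satisfy strict log-concavity: A_n(k-1) A_n(k+1) < A_n(k)² for all 2 ≤ k ≤ r-1, where r = n(n-1)/2 - 1. -/
open Polynomial

/-- Recurrence on coefficients. -/
lemma A_rec (n k : ℕ) : A (n + 2) k =
    (∑ i ∈ Finset.range (n + 2), if i ≤ k then A (n + 1) (k - i) else 0)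
      + if k = (n + 2).choose 2 then (-1) ^ (n + 2) else 0 := by
  have e : ((-1 : ℤ[X]) ^ (n + 2)) = C ((-1) ^ (n + 2)) := by simp
  unfold A
  rw [dq, coeff_add, e, coeff_C_mul, coeff_X_pow, Finset.sum_mul, finsetSum_coeff]
  simp only [coeff_X_pow_mul']
  congr 1
  split_ifs <;> simp

/-- List model of one step. -/
def stepL (n : ℕ) (l : List ℤ) : List ℤ :=
  (List.range (l.length + n + 2)).map fun k =>
    (∑ i ∈ Finset.range (n + 2), if i ≤ k then l.getD (k - i) 0 else 0)
      + if k = (n + 2).choose 2 then (-1) ^ (n + 2) else 0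

lemma stepL_spec (n : ℕ) (l l' : List ℤ) (h : ∀ k, A (n + 1) k = l.getD k 0)
    (hl : (n + 2).choose 2 < l.length + n + 2) (e : stepL n l = l') :
    ∀ k, A (n + 2) k = l'.getD k 0 := by
  intro k
  subst e
  rw [A_rec]
  simp only [h]
  by_cases hk : k < l.length + n + 2
  · simp [stepL, List.getD, hk]
  · have h2 : ¬ k = (n + 2).choose 2 := by omega
    rw [if_neg h2, add_zero]
    have : (stepL n l).getD k 0 = 0 := by
      apply List.getD_eq_default
      simp [stepL]; omega
    rw [this]
    apply Finset.sum_eq_zero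
    intro i hi
    have := Finset.mem_range.1 hi
    rw [if_pos (by omega)]
    apply List.getD_eq_default
    omega

/-- extension by zero to ℤ -/
noncomputable def F (n : ℕ) (k : ℤ) : ℤ := if k < 0 then 0 else A n k.toNat

/-- window sums -/
def win (n : ℕ) (f : ℤ → ℤ) (k : ℤ) : ℤ := ∑ j ∈ Finset.range (n + 1), f (k - j)

lemma F_rec (n : ℕ) (k : ℤ) : F (n + 2) k = win (n + 1) (F (n + 1)) k
    + if k = ((n + 2).choose 2 : ℕ) then (-1) ^ (n + 2) else 0 := by
  unfold win
  rcases lt_or_ge k 0 with hk | hk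
  · have h1 : ¬ k = ((n + 2).choose 2 : ℕ) := by omega
    rw [if_neg h1, F, if_pos hk, add_zero, eq_comm]
    apply Finset.sum_eq_zero
    intro j _
    rw [F, if_pos (by omega)]
  · lift k to ℕ using hk
    rw [F, if_neg (by omega)]
    simp only [Int.toNat_natCast]
    rw [A_rec]
    congr 1
    · apply Finset.sum_congr rfl
      intro i _
      unfold F
      by_cases h : i ≤ k
      · rw [if_pos h, if_neg (by omega)]
        congr 1; omega
      · rw [if_neg h, if_pos (by omega)]
    · simp only [Nat.cast_inj]

/-- cross terms -/
def Cr (f : ℤ → ℤ) (k l : ℤ) : ℤ := f k * f l - f (k + 1) * f (l - 1)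

lemma win_identity (n : ℕ) (f : ℤ → ℤ) (k : ℤ) :
    win n f k ^ 2 - win n f (k - 1) * win n f (k + 1) =
      ∑ j ∈ Finset.range (n + 1), Cr f k (k - j)
        + ∑ j ∈ Finset.range n, Cr f (k - 1 - j) (k - n) := by
  set T := ∑ j ∈ Finset.range n, f (k - 1 - j) with hT
  set U := ∑ j ∈ Finset.range n, f (k - j) with hU
  have h1 : win n f k = f k + T := by
    rw [win, Finset.sum_range_succ', add_comm, hT]
    congr 1
    · simp
    · apply Finset.sum_congr rfl; intro j _; congr 1; push_cast; ring
  have h2 : win n f k = U + f (k - n) := by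
    rw [win, Finset.sum_range_succ]
  have h3 : win n f (k - 1) = T + f (k - 1 - n) := by
    rw [win, Finset.sum_range_succ]
  have h4 : win n f (k + 1) = f (k + 1) + U := by
    rw [win, Finset.sum_range_succ', add_comm, hU]
    congr 1
    · simp
    · apply Finset.sum_congr rfl; intro j _; congr 1; push_cast; ring
  have h5 : ∑ j ∈ Finset.range (n + 1), Cr f k (k - j)
      = f k * win n f k - f (k + 1) * win n f (k - 1) := by
    simp only [Cr, win, Finset.sum_sub_distrib, Finset.mul_sum]
    congr 1
    apply Finset.sum_congr rfl; intro j _; congr 2; ring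
  have h6 : ∑ j ∈ Finset.range n, Cr f (k - 1 - j) (k - n)
      = f (k - n) * T - f (k - 1 - n) * U := by
    simp only [Cr, hT, hU, Finset.sum_sub_distrib, Finset.mul_sum]
    congr 1
    · apply Finset.sum_congr rfl; intro j _; ring
    · apply Finset.sum_congr rfl; intro j _
      rw [mul_comm]; congr 2 <;> ring
  rw [h5, h6, h3, h4]
  have h7 : f k + T = U + f (k - n) := h1.symm.trans h2
  rw [h1]
  linear_combination T * h7

lemma cross {f : ℤ → ℤ} {m M : ℤ} (hM : M ≤ m) (hz : ∀ k, k < 1 → f k = 0)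
    (hnn : ∀ k, 0 ≤ f k)
    (hp : ∀ k, 1 ≤ k → k ≤ m → 0 < f k)
    (hl : ∀ k, 1 ≤ k → k ≤ M → f (k - 1) * f (k + 1) < f k ^ 2) (l : ℤ) (d : ℕ)
    (h : l + d ≤ M) : 0 ≤ Cr f (l + d) l := by
  unfold Cr
  rcases lt_or_ge l 1 with h1 | h1
  · rw [hz (l - 1) (by omega), mul_zero, sub_zero]
    exact mul_nonneg (hnn _) (hnn _)
  induction d with
  | zero =>
    have := hl l h1 (by simpa using h)
    simp; nlinarith
  | succ d ih =>
    have ih := ih (by push_cast at h; omega)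
    have a := hl (l + d + 1) (by omega) (by push_cast at h; omega)
    have b := hp (l + d) (by omega) (by push_cast at h; omega)
    have c := hp (l + d + 1) (by omega) (by push_cast at h; omega)
    have e : l + d + 1 - 1 = l + (d : ℤ) := by ring
    rw [e] at a
    push_cast
    rw [show l + ((d : ℤ) + 1) = l + d + 1 by ring]
    have n1 := hnn l
    have n2 := hnn (l - 1)
    have key : 0 ≤ (f (l + d) * f (l + d + 1)) *
        (f (l + d + 1) * f l - f (l + d + 1 + 1) * f (l - 1)) := by
      have a1 := mul_le_mul_of_nonneg_right a.le (mul_nonneg n2 c.le)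
      have a2 := mul_nonneg ih (mul_nonneg c.le c.le)
      nlinarith
    exact nonneg_of_mul_nonneg_right key (mul_pos b c)

/-- strictly log-concave on `[1,m]`, zero elsewhere -/
structure SLC (f : ℤ → ℤ) (m : ℤ) : Prop where
  z0 : ∀ k, k < 1 → f k = 0
  z1 : ∀ k, m < k → f k = 0
  p : ∀ k, 1 ≤ k → k ≤ m → 0 < f k
  l : ∀ k, 1 ≤ k → k ≤ m → f (k - 1) * f (k + 1) < f k ^ 2

lemma SLC.nn {f : ℤ → ℤ} {m : ℤ} (h : SLC f m) (k : ℤ) : 0 ≤ f k := by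
  rcases lt_or_ge k 1 with h1 | h1
  · rw [h.z0 k h1]
  rcases lt_or_ge m k with h2 | h2
  · rw [h.z1 k h2]
  exact (h.p k h1 h2).le

lemma win_zero0 {n : ℕ} {f : ℤ → ℤ} (hz : ∀ k, k < 1 → f k = 0) (k : ℤ) (hk : k < 1) :
    win n f k = 0 := by
  apply Finset.sum_eq_zero
  intro j _
  exact hz _ (by omega)

lemma win_zero1 {n : ℕ} {f : ℤ → ℤ} {m : ℤ} (hz : ∀ k, m < k → f k = 0) (k : ℤ)
    (hk : m + n < k) : win n f k = 0 := by
  apply Finset.sum_eq_zero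
  intro j hj
  have := Finset.mem_range.1 hj
  exact hz _ (by omega)

lemma win_pos {n : ℕ} {f : ℤ → ℤ} {m : ℤ} (hnn : ∀ k, 0 ≤ f k)
    (hp : ∀ k, 1 ≤ k → k ≤ m → 0 < f k) (hm : 1 ≤ m) (k : ℤ) (h1 : 1 ≤ k) (h2 : k ≤ m + n) :
    0 < win n f k := by
  apply Finset.sum_pos' (fun i _ => hnn _)
  rcases le_or_gt k m with h | h
  · exact ⟨0, by simp, by simpa using hp k h1 h⟩
  · refine ⟨(k - m).toNat, Finset.mem_range.2 (by omega), hp _ (by omega) (by omega)⟩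

lemma win_diff (n : ℕ) (f : ℤ → ℤ) (k : ℤ) :
    win n f k = win n f (k + 1) + f (k - n) - f (k + 1) := by
  rw [win, win, Finset.sum_range_succ, Finset.sum_range_succ' (fun j : ℕ => f (k + 1 - j))]
  have : ∀ j ∈ Finset.range n, f (k + 1 - ((j + 1 : ℕ) : ℤ)) = f (k - j) := by
    intro j _; congr 1; push_cast; ring
  rw [Finset.sum_congr rfl this]
  simp
  ring

/-- the even step -/
lemma SLC.win {f : ℤ → ℤ} {m : ℤ} (h : SLC f m) (hm : 1 ≤ m) (n : ℕ) (hn : 1 ≤ n) (hnm : n ≤ m) :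
    SLC (win n f) (m + n) := by
  have hC : ∀ k l, l ≤ k → 0 ≤ Cr f k l := by
    intro k l hkl
    rcases le_or_gt k m with hk | hk
    · have := cross le_rfl h.z0 h.nn h.p h.l l (k - l).toNat (by omega)
      rwa [show l + ((k - l).toNat : ℤ) = k by omega] at this
    · rw [Cr, h.z1 (k + 1) (by omega), zero_mul, sub_zero]
      exact mul_nonneg (h.nn _) (h.nn _)
  refine ⟨win_zero0 h.z0, win_zero1 h.z1, win_pos h.nn h.p hm, ?_⟩
  intro k h1 h2
  rw [← sub_pos, win_identity]
  have n1 : ∀ j ∈ Finset.range (n + 1), 0 ≤ Cr f k (k - j) := fun j _ => hC _ _ (by omega)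
  have n2 : ∀ j ∈ Finset.range n, 0 ≤ Cr f (k - 1 - j) (k - n) := fun j hj =>
    hC _ _ (by have := Finset.mem_range.1 hj; omega)
  rcases le_or_gt k m with hk | hk
  · apply add_pos_of_pos_of_nonneg _ (Finset.sum_nonneg n2)
    apply Finset.sum_pos' n1 ⟨0, by simp, ?_⟩
    have := h.l k h1 hk
    simp [Cr]; nlinarith
  · apply add_pos_of_nonneg_of_pos (Finset.sum_nonneg n1)
    apply Finset.sum_pos' n2 ⟨n - 1, by simp; omega, ?_⟩
    have := h.l (k - n) (by omega) (by omega)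
    rw [show k - 1 - ((n - 1 : ℕ) : ℤ) = k - n by omega, Cr]; nlinarith

/-- the invariant at even indices -/
structure EV (f : ℤ → ℤ) (R m t : ℤ) : Prop where
  z0 : ∀ k, k < 1 → f k = 0
  z1 : ∀ k, R < k → f k = 0
  p : ∀ k, 1 ≤ k → k ≤ R → 0 < f k
  l : ∀ k, 1 ≤ k → k ≤ R - 2 → f (k - 1) * f (k + 1) < f k ^ 2
  t0 : f R = 1
  t1 : f (R - 1) = m
  t2 : f (R - 2) = m ^ 2 + m
  t3 : f (R - 3) = t
  hm : 4 ≤ m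
  ht : t < m ^ 3 + m ^ 2 - m

lemma EV.nn {f : ℤ → ℤ} {R m t : ℤ} (h : EV f R m t) (k : ℤ) : 0 ≤ f k := by
  rcases lt_or_ge k 1 with h1 | h1
  · rw [h.z0 k h1]
  rcases lt_or_ge R k with h2 | h2
  · rw [h.z1 k h2]
  exact (h.p k h1 h2).le

lemma EV.cr {f : ℤ → ℤ} {R m t : ℤ} (h : EV f R m t) (hR : 5 ≤ R) (k l : ℤ) (hkl : l ≤ k)
    (hne : l ≠ R - 1) : 0 ≤ Cr f k l := by
  have hc : ∀ k l, l ≤ k → k ≤ R - 2 → 0 ≤ Cr f k l := by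
    intro k l hkl hk
    have := cross (by omega : R - 2 ≤ R) h.z0 h.nn h.p h.l l (k - l).toNat (by omega)
    rwa [show l + ((k - l).toNat : ℤ) = k by omega] at this
  rcases lt_trichotomy k (R - 1) with hk | hk | hk
  · exact hc k l hkl (by omega)
  · subst hk
    have hm := h.hm
    have ht := h.ht
    have e : t ≤ m * (m ^ 2 + m) := by nlinarith
    rcases eq_or_lt_of_le (show l ≤ R - 2 by omega) with h2 | h2
    · subst h2
      rw [Cr, show R - 1 + 1 = R by ring, show R - 2 - 1 = R - 3 by ring, h.t0, h.t1, h.t2, h.t3]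
      linarith
    · have := hc (R - 3) l (by omega) (by omega)
      rw [Cr, show R - 3 + 1 = R - 2 by ring, h.t2, h.t3] at this
      rw [Cr, show R - 1 + 1 = R by ring, h.t0, h.t1]
      have q : 0 < m ^ 2 + m := by positivity
      have nl := h.nn l
      have : 0 ≤ (m ^ 2 + m) * (m * f l - 1 * f (l - 1)) := by nlinarith
      exact nonneg_of_mul_nonneg_right this q
  · rw [Cr, h.z1 (k + 1) (by omega), zero_mul, sub_zero]
    exact mul_nonneg (h.nn _) (h.nn _)

lemma EV.win_l {f : ℤ → ℤ} {R m t : ℤ} (h : EV f R m t) (n : ℕ) (hn : 3 ≤ n) (hnR : n + 5 ≤ R)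
    (k : ℤ) (h1 : 1 ≤ k) (h2 : k ≤ R + n - 2) :
    win n f (k - 1) * win n f (k + 1) < win n f k ^ 2 := by
  have hC := h.cr (by omega)
  rw [← sub_pos, win_identity]
  have n2 : ∀ j ∈ Finset.range n, 0 ≤ Cr f (k - 1 - j) (k - n) := fun j hj =>
    hC _ _ (by have := Finset.mem_range.1 hj; omega) (by omega)
  by_cases hk : k = R - 1
  · apply add_pos_of_pos_of_nonneg _ (Finset.sum_nonneg n2)
    obtain ⟨n', rfl⟩ : ∃ n', n = n' + 1 := ⟨n - 1, by omega⟩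
    rw [Finset.sum_range_succ', Finset.sum_range_succ']
    have : 0 ≤ ∑ j ∈ Finset.range n', Cr f k (k - ((j + 1 + 1 : ℕ) : ℤ)) :=
      Finset.sum_nonneg fun j _ => hC _ _ (by omega) (by omega)
    rw [add_assoc]
    apply add_pos_of_nonneg_of_pos this
    subst hk
    push_cast
    simp only [Cr, sub_zero]
    rw [show R - 1 + 1 = R by ring, show R - 1 - 1 - 1 = R - 3 by ring,
      show R - 1 - 1 = R - 2 by ring, h.t0, h.t1, h.t2, h.t3]
    have := h.ht
    nlinarith
  have n1 : ∀ j ∈ Finset.range (n + 1), 0 ≤ Cr f k (k - j) := by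
    intro j _
    by_cases e : k - j = R - 1
    · rw [Cr, h.z1 (k + 1) (by omega), zero_mul, sub_zero]
      exact mul_nonneg (h.nn _) (h.nn _)
    · exact hC _ _ (by omega) e
  rcases le_or_gt k R with hk2 | hk2
  · apply add_pos_of_pos_of_nonneg _ (Finset.sum_nonneg n2)
    apply Finset.sum_pos' n1 ⟨0, by simp, ?_⟩
    rcases eq_or_lt_of_le hk2 with e | e
    · simp [Cr, e, h.t0, h.z1 (R + 1) (by omega)]
    · have := h.l k h1 (by omega)
      simp [Cr]; nlinarith
  · apply add_pos_of_nonneg_of_pos (Finset.sum_nonneg n1)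
    apply Finset.sum_pos' n2 ⟨n - 1, by simp; omega, ?_⟩
    have := h.l (k - n) (by omega) (by omega)
    rw [show k - 1 - ((n - 1 : ℕ) : ℤ) = k - n by omega, Cr]; nlinarith

lemma win_tops {f : ℤ → ℤ} {R : ℤ} (n : ℕ) (hn : 3 ≤ n) (h : ∀ k, R < k → f k = 0) :
    win n f (R + n) = f R ∧ win n f (R + n - 1) = f R + f (R - 1) ∧
    win n f (R + n - 2) = f R + f (R - 1) + f (R - 2) ∧
    win n f (R + n - 3) = f R + f (R - 1) + f (R - 2) + f (R - 3) := by
  have a0 := win_diff n f (R + n)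
  have a1 := win_diff n f (R + n - 1)
  have a2 := win_diff n f (R + n - 2)
  have a3 := win_diff n f (R + n - 3)
  rw [win_zero1 h (R + n + 1) (by omega), h (R + n + 1) (by omega),
    show R + n - n = R by ring] at a0
  rw [show R + n - 1 + 1 = R + n by ring, h (R + n) (by omega),
    show R + n - 1 - n = R - 1 by ring] at a1
  rw [show R + n - 2 + 1 = R + n - 1 by ring, h (R + n - 1) (by omega),
    show R + n - 2 - n = R - 2 by ring] at a2
  rw [show R + n - 3 + 1 = R + n - 2 by ring, h (R + n - 2) (by omega),
    show R + n - 3 - n = R - 3 by ring] at a3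
  refine ⟨?_, ?_, ?_, ?_⟩ <;> linarith

lemma odd_step {f h : ℤ → ℤ} {R m t : ℤ} (H : EV f R m t) (n : ℕ) (hn : 3 ≤ n)
    (hnR : n + 5 ≤ R) (hh : ∀ k, h k = win n f k + if k = R + n then -1 else 0) :
    SLC h (R + n - 1) ∧ h (R + n - 1) = 1 + m ∧ h (R + n - 2) = 1 + m + (m ^ 2 + m) ∧
      h (R + n - 3) = 1 + m + (m ^ 2 + m) + t := by
  obtain ⟨b0, b1, b2, b3⟩ := win_tops n hn H.z1
  rw [H.t0] at b0
  rw [H.t0, H.t1] at b1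
  rw [H.t0, H.t1, H.t2] at b2
  rw [H.t0, H.t1, H.t2, H.t3] at b3
  have hne : ∀ k, k ≠ R + n → h k = win n f k := fun k hk => by rw [hh, if_neg hk, add_zero]
  have htop : h (R + n) = 0 := by rw [hh, if_pos rfl, b0]; norm_num
  have hp : ∀ k, 1 ≤ k → k ≤ R + n - 1 → 0 < h k := by
    intro k h1 h2
    rw [hne k (by omega)]
    exact win_pos H.nn H.p (by omega) k h1 (by omega)
  refine ⟨⟨?_, ?_, hp, ?_⟩, ?_, ?_, ?_⟩
  · intro k hk
    rw [hne k (by omega), win_zero0 H.z0 k hk]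
  · intro k hk
    by_cases e : k = R + n
    · rw [e, htop]
    · rw [hne k e, win_zero1 H.z1 k (by omega)]
  · intro k h1 h2
    by_cases e : k = R + n - 1
    · have := hp k h1 h2
      rw [show k + 1 = R + n by omega, htop, mul_zero]
      positivity
    · rw [hne k (by omega), hne _ (by omega), hne _ (by omega)]
      exact H.win_l n hn hnR k h1 (by omega)
  · rw [hne _ (by omega), b1]
  · rw [hne _ (by omega), b2]
  · rw [hne _ (by omega), b3]

lemma even_step {g h : ℤ → ℤ} {S m t : ℤ} (H : SLC g S) (hm : 4 ≤ m + 1)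
    (ht : 3 + 3 * m + 2 * (m ^ 2 + m) + t < (m + 1) ^ 3 + (m + 1) ^ 2 - (m + 1))
    (s1 : g S = 1 + m) (s2 : g (S - 1) = 1 + m + (m ^ 2 + m))
    (s3 : g (S - 2) = 1 + m + (m ^ 2 + m) + t) (n : ℕ) (hn : 3 ≤ n)
    (hnS : n + 5 ≤ S) (hh : ∀ k, h k = win n g k + if k = S + n + 1 then 1 else 0) :
    EV h (S + n + 1) (m + 1) (3 + 3 * m + 2 * (m ^ 2 + m) + t) := by
  obtain ⟨b0, b1, b2, b3⟩ := win_tops n hn H.z1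
  have W := H.win (by omega) n (by omega) (by omega)
  have hne : ∀ k, k ≠ S + n + 1 → h k = win n g k := fun k hk => by rw [hh, if_neg hk, add_zero]
  have htop : h (S + n + 1) = 1 := by rw [hh, if_pos rfl, W.z1 _ (by omega)]; norm_num
  refine ⟨?_, ?_, ?_, ?_, htop, ?_, ?_, ?_, hm, ht⟩
  · intro k hk
    rw [hne k (by omega), W.z0 k hk]
  · intro k hk
    rw [hne k (by omega), W.z1 k (by omega)]
  · intro k h1 h2
    by_cases e : k = S + n + 1
    · rw [e, htop]; norm_num
    · rw [hne k e]; exact W.p k h1 (by omega)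
  · intro k h1 h2
    rw [hne k (by omega), hne _ (by omega), hne _ (by omega)]
    exact W.l k h1 (by omega)
  · rw [hne _ (by omega), show S + n + 1 - 1 = S + n by ring, b0, s1]; ring
  · rw [hne _ (by omega), show S + n + 1 - 2 = S + n - 1 by ring, b1, s1, s2]; ring
  · rw [hne _ (by omega), show S + n + 1 - 3 = S + n - 2 by ring, b2, s1, s2, s3]; ring

lemma choose_big (n : ℕ) (hn : 10 ≤ n) : 4 * n ≤ n.choose 2 := by
  induction n, hn using Nat.le_induction with
  | base => decide
  | succ n h ih =>
    have := Nat.choose_succ_succ n 1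
    simp only [Nat.choose_one_right] at this
    norm_num at this
    omega

lemma choose_two_succ (n : ℕ) : (n + 1).choose 2 = n.choose 2 + n := by
  have := Nat.choose_succ_succ n 1
  simp only [Nat.choose_one_right] at this
  norm_num at this
  omega

lemma odd_main (n : ℕ) (hn : 10 ≤ n) (he : Even n) {m t : ℤ} (H : EV (F n) (n.choose 2 : ℕ) m t) :
    SLC (F (n + 1)) ((n.choose 2 : ℕ) + n - 1) ∧ F (n + 1) ((n.choose 2 : ℕ) + n - 1) = 1 + m ∧
      F (n + 1) ((n.choose 2 : ℕ) + n - 2) = 1 + m + (m ^ 2 + m) ∧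
      F (n + 1) ((n.choose 2 : ℕ) + n - 3) = 1 + m + (m ^ 2 + m) + t := by
  have hb := choose_big n hn
  refine odd_step H n (by omega) (by omega) ?_
  intro k
  obtain ⟨n', rfl⟩ : ∃ n', n = n' + 1 := ⟨n - 1, by omega⟩
  have hs : (-1 : ℤ) ^ (n' + 2) = -1 := he.add_one.neg_one_pow
  rw [F_rec, choose_two_succ (n' + 1), hs]
  push_cast
  rfl

lemma even_main (n : ℕ) (hn : 10 ≤ n) (he : Even n) {m t : ℤ} (H : EV (F n) (n.choose 2 : ℕ) m t) :
    ∃ m' t', EV (F (n + 2)) ((n + 2).choose 2 : ℕ) m' t' := by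
  have hb := choose_big n hn
  obtain ⟨a, b, c, d⟩ := odd_main n hn he H
  have hm := H.hm
  have ht := H.ht
  have := even_step (h := F (n + 2)) a (by omega : 4 ≤ m + 1) (t := t) (by nlinarith) b
    (by rw [← c]; congr 1; ring) (by rw [← d]; congr 1; ring) (n + 1) (by omega) (by push_cast; omega) ?_
  · refine ⟨m + 1, 3 + 3 * m + 2 * (m ^ 2 + m) + t, ?_⟩
    convert this using 1
    rw [choose_two_succ (n + 1), choose_two_succ n]; push_cast; ring
  · intro k
    have hs : (-1 : ℤ) ^ (n + 2) = 1 := (he.add even_two).neg_one_pow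
    rw [F_rec, choose_two_succ (n + 1), choose_two_succ n, hs]
    push_cast
    congr 2
    apply propext
    constructor <;> intro h <;> linarith

lemma A_two (k : ℕ) : A 2 k = [0, 1].getD k 0 := by
  rw [A_rec]
  have : ∀ j, A 1 j = 0 := by intro j; simp [A, dq]
  simp only [this]
  rcases k with _ | _ | k <;> simp [Nat.choose]

lemma A_L3 : ∀ k, A 3 k =
    ([0, 1, 1, 0, 0] : List ℤ).getD k 0 :=
  stepL_spec 1 _ _ A_two (by decide) (by decide +kernel)

lemma A_L4 : ∀ k, A 4 k =
    ([0, 1, 2, 2, 2, 1, 1, 0, 0] : List ℤ).getD k 0 :=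
  stepL_spec 2 _ _ A_L3 (by decide) (by decide +kernel)

lemma A_L5 : ∀ k, A 5 k =
    ([0, 1, 3, 5, 7, 8, 8, 6, 4, 2, 0, 0, 0, 0] : List ℤ).getD k 0 :=
  stepL_spec 3 _ _ A_L4 (by decide) (by decide +kernel)

lemma A_L6 : ∀ k, A 6 k =
    ([0, 1, 4, 9, 16, 24, 32, 37, 38, 35, 28, 20, 12, 6, 2, 1, 0, 0, 0, 0] : List ℤ).getD k 0 :=
  stepL_spec 4 _ _ A_L5 (by decide) (by decide +kernel)

lemma A_L7 : ∀ k, A 7 k =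
    ([0, 1, 5, 14, 30, 54, 86, 123, 160, 191, 210, 214, 202, 176, 141, 104, 69, 41, 21, 9, 3, 0, 0, 0, 0, 0, 0] : List ℤ).getD k 0 :=
  stepL_spec 5 _ _ A_L6 (by decide) (by decide +kernel)

lemma A_L8 : ∀ k, A 8 k =
    ([0, 1, 6, 20, 50, 104, 190, 313, 473, 663, 868, 1068, 1240, 1362, 1417, 1398, 1307, 1157, 968, 763, 564, 388, 247, 143, 74, 33, 12, 3, 1, 0, 0, 0, 0, 0, 0] : List ℤ).getD k 0 :=
  stepL_spec 6 _ _ A_L7 (by decide) (by decide +kernel)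

lemma A_L9 : ∀ k, A 9 k =
    ([0, 1, 7, 27, 77, 181, 371, 684, 1157, 1820, 2687, 3749, 4969, 6281, 7594, 8802, 9796, 10480, 10785, 10680, 10176, 9324, 8209, 6935, 5611, 4337, 3192, 2227, 1465, 901, 513, 266, 123, 49, 16, 4, 0, 0, 0, 0, 0, 0, 0, 0] : List ℤ).getD k 0 :=
  stepL_spec 7 _ _ A_L8 (by decide) (by decide +kernel)

lemma A_L10 : ∀ k, A 10 k =
    ([0, 1, 8, 35, 112, 293, 664, 1348, 2505, 4325, 7012, 10760, 15722, 21976, 29493, 38114, 47539, 57335, 66963, 75823, 83312, 88887, 92127, 92781, 90798, 86333, 79729, 71476, 62156, 52377, 42714, 33656, 25570, 18684, 13089, 8756, 5564, 3337, 1872, 971, 458, 192, 69, 20, 4, 1, 0, 0, 0, 0, 0, 0, 0, 0] : List ℤ).getD k 0 :=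
  stepL_spec 8 _ _ A_L9 (by decide) (by decide +kernel)

lemma small6 : ∀ k, k < 36 → 2 ≤ k → k ≤ 6 * (6 - 1) / 2 - 1 - 1 →
    A 6 (k - 1) * A 6 (k + 1) < A 6 k ^ 2 := by
  simp only [A_L6]; decide +kernel

lemma small7 : ∀ k, k < 36 → 2 ≤ k → k ≤ 7 * (7 - 1) / 2 - 1 - 1 →
    A 7 (k - 1) * A 7 (k + 1) < A 7 k ^ 2 := by
  simp only [A_L7]; decide +kernel

lemma small8 : ∀ k, k < 36 → 2 ≤ k → k ≤ 8 * (8 - 1) / 2 - 1 - 1 →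
    A 8 (k - 1) * A 8 (k + 1) < A 8 k ^ 2 := by
  simp only [A_L8]; decide +kernel

lemma small9 : ∀ k, k < 36 → 2 ≤ k → k ≤ 9 * (9 - 1) / 2 - 1 - 1 →
    A 9 (k - 1) * A 9 (k + 1) < A 9 k ^ 2 := by
  simp only [A_L9]; decide +kernel

lemma F_nat (n k : ℕ) : F n k = A n k := by simp [F]

lemma EV_ten : EV (F 10) ((10 : ℕ).choose 2 : ℕ) 4 69 := by
  have e : (((10 : ℕ).choose 2 : ℕ) : ℤ) = 45 := by decide
  rw [e]
  have f0 : ∀ k : ℤ, k < 1 → F 10 k = 0 := by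
    intro k hk
    rcases lt_or_ge k 0 with h | h
    · simp [F, h]
    · obtain rfl : k = ((0 : ℕ) : ℤ) := by omega
      rw [F_nat, A_L10]; rfl
  have hp : ∀ k, k < 46 → 1 ≤ k → 0 < A 10 k := by
    simp only [A_L10]; decide +kernel
  have hl : ∀ k, k < 44 → 1 ≤ k → A 10 (k - 1) * A 10 (k + 1) < A 10 k ^ 2 := by
    simp only [A_L10]; decide +kernel
  refine ⟨f0, ?_, ?_, ?_, ?_, ?_, ?_, ?_, by norm_num, by norm_num⟩
  · intro k hk
    lift k to ℕ using by omega
    rw [F_nat, A_L10]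
    rcases lt_or_ge k 54 with h | h
    · have : ∀ k, k < 54 → 45 < k → A 10 k = 0 := by
        simp only [A_L10]; decide +kernel
      rw [← A_L10]
      exact this k h (by omega)
    · exact List.getD_eq_default _ _ (by simpa using h)
  · intro k h1 h2
    lift k to ℕ using by omega
    rw [F_nat]
    exact hp k (by omega) (by omega)
  · intro k h1 h2
    lift k to ℕ using by omega
    have := hl k (by omega) (by omega)
    rw [show (k : ℤ) - 1 = ((k - 1 : ℕ) : ℤ) by omega, show (k : ℤ) + 1 = ((k + 1 : ℕ) : ℤ) by omega,
      F_nat, F_nat, F_nat]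
    exact this
  · rw [show (45 : ℤ) = ((45 : ℕ) : ℤ) by norm_num, F_nat, A_L10]; rfl
  · rw [show (45 : ℤ) - 1 = ((44 : ℕ) : ℤ) by norm_num, F_nat, A_L10]; rfl
  · rw [show (45 : ℤ) - 2 = ((43 : ℕ) : ℤ) by norm_num, F_nat, A_L10]; rfl
  · rw [show (45 : ℤ) - 3 = ((42 : ℕ) : ℤ) by norm_num, F_nat, A_L10]; rfl

lemma EV_all (j : ℕ) : ∃ m t, EV (F (10 + 2 * j)) ((10 + 2 * j).choose 2 : ℕ) m t := by
  induction j with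
  | zero => exact ⟨_, _, EV_ten⟩
  | succ j ih =>
    obtain ⟨m, t, h⟩ := ih
    exact even_main (10 + 2 * j) (by omega) ⟨5 + j, by ring⟩ h

theorem stmt_18 (n : ℕ) (hn : 6 ≤ n) :
    ∀ k, 2 ≤ k → k ≤ n * (n - 1) / 2 - 1 - 1 →
      A n (k - 1) * A n (k + 1) < A n k ^ 2 := by
  intro k h1 h2
  rcases lt_or_ge n 10 with h | h
  · have hk : k < 36 := by
      interval_cases n <;> norm_num at h2 <;> omega
    interval_cases n
    · exact small6 k hk h1 h2
    · exact small7 k hk h1 h2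
    · exact small8 k hk h1 h2
    · exact small9 k hk h1 h2
  · rw [← Nat.choose_two_right] at h2
    have key : F n ((k : ℤ) - 1) * F n ((k : ℤ) + 1) < F n k ^ 2 := by
      rcases Nat.even_or_odd' n with ⟨c, hc | hc⟩
      · obtain ⟨m, t, H⟩ := EV_all (c - 5)
        rw [show 10 + 2 * (c - 5) = n by omega] at H
        have hb := choose_big n h
        exact H.l k (by omega) (by omega)
      · obtain ⟨m, t, H⟩ := EV_all (c - 5)
        have hb := choose_big (10 + 2 * (c - 5)) (by omega)
        have := (odd_main _ (by omega) ⟨c, by omega⟩ H).1.l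
        have e : n = 10 + 2 * (c - 5) + 1 := by omega
        rw [e, choose_two_succ] at h2
        rw [← e] at this
        exact this k (by omega) (by omega)
    rw [show (k : ℤ) - 1 = ((k - 1 : ℕ) : ℤ) by omega, show (k : ℤ) + 1 = ((k + 1 : ℕ) : ℤ) by omega,
      F_nat, F_nat, F_nat] at key
    exact key
end
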